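/- For every m ∈ S and j ≥ 0, the dimension over k of the reduced homology H̃_j(∇_m) equals the multigraded Betti number dim_k (N_j)_m/(𝔪 N_j)_m, where N_j is the j-th syzygy module in the minimal S-graded free resolution of k[S] over R (N_0 = I_S). -/

import Mathlib

open MvPolynomial

section SimplicialHomology

variable (k : Type) [Field k] {V : Type} [LinearOrder V]

/-- The (reduced) simplicial boundary operator on formal `k`-linear combinations of finite
subsets of the (linearly ordered) vertex set `V`, with the usual alternating signs. -/
noncomputable def sBoundary : (Finset V →₀ k) →ₗ[k] (Finset V →₀ k) :=
  Finsupp.lsum k fun F =>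
    LinearMap.toSpanSingleton k _
      (∑ x ∈ F, ((-1 : k) ^ (F.filter (fun y => y < x)).card) •
        Finsupp.single (F.erase x) (1 : k))

/-- The faces of cardinality `c` of the simplicial complex `K` (the empty face is always
included, so that the chain complex below computes *reduced* homology). -/
def sFaces (K : Set (Finset V)) (c : ℕ) : Set (Finset V) :=
  {F | F.card = c ∧ (F = ∅ ∨ F ∈ K)}

/-- The reduced `j`-cycles `Z̃_j(K)`: chains supported on the `j`-dimensional faces
(of cardinality `j+1`) killed by the boundary operator. -/
noncomputable def sCycles (K : Set (Finset V)) (j : ℕ) : Submodule k (Finset V →₀ k) :=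
  Finsupp.supported k k (sFaces K (j + 1)) ⊓ LinearMap.ker (sBoundary k)

/-- The reduced `j`-boundaries `B̃_j(K)`: images under the boundary operator of chains
supported on the `(j+1)`-dimensional faces (of cardinality `j+2`). -/
noncomputable def sBoundaries (K : Set (Finset V)) (j : ℕ) : Submodule k (Finset V →₀ k) :=
  Submodule.map (sBoundary k) (Finsupp.supported k k (sFaces K (j + 2)))

/-- The reduced `j`-th simplicial homology `H̃_j(K) = Z̃_j(K)/B̃_j(K)` of `K` with
coefficients in `k`, realized as the image of the cycles in the quotient of the chain
space by the boundaries. -/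
noncomputable def sHred (K : Set (Finset V)) (j : ℕ) :
    Submodule k ((Finset V →₀ k) ⧸ sBoundaries k K j) :=
  Submodule.map (sBoundaries k K j).mkQ (sCycles k K j)

end SimplicialHomology

/-- The simplicial complex `∇_m` on the vertex set `C_m ⊆ ℕ^r` (with the lexicographic
linear order on vertices). -/
def nablaLex {G : Type} [AddCommGroup G] {r : ℕ} (n : Fin r → G) (m : G) :
    Set (Finset (Lex (Fin r →₀ ℕ))) :=
  {F | F.Nonempty ∧ (∀ a ∈ F, ((ofLex a).sum fun i e => e • n i) = m) ∧
    ∃ i, ∀ a ∈ F, 0 < ofLex a i}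

/-- The `S`-degree-`m` graded piece of a free module `R^c` with degree shifts `d`. -/
noncomputable def shiftedPiece {G : Type} [AddCommGroup G] (k : Type) [Field k]
    {r c : ℕ} (n : Fin r → G) (d : Fin c → G) (m : G) :
    Submodule k (Fin c → MvPolynomial (Fin r) k) :=
  Submodule.pi Set.univ fun i => weightedHomogeneousSubmodule k n (m - d i)

/-- The multigraded Betti number `dim_k (N)_m/(𝔪N)_m` of a graded submodule
`N ⊆ R^c` (with degree shifts `d`) in `S`-degree `m`. -/
noncomputable def multigradedBetti {G : Type} [AddCommGroup G] (k : Type) [Field k]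
    {r c : ℕ} (n : Fin r → G) (d : Fin c → G) (m : G)
    (N : Submodule (MvPolynomial (Fin r) k) (Fin c → MvPolynomial (Fin r) k)) : ℕ :=
  Module.finrank k ↥(Submodule.map
    (((Ideal.span (Set.range (X : Fin r → MvPolynomial (Fin r) k)) • N).restrictScalars k ⊓
        shiftedPiece k n d m).mkQ)
    (N.restrictScalars k ⊓ shiftedPiece k n d m))

/-!
Let monomials act by translation on the chains of the full simplices on the fibres `C_γ`, all
degrees `γ` taken together. Every nonempty set of monomials is a unique translate of one with
greatest common divisor `1`, so these chains are free over `R`, and since full simplices are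
acyclic, they form a graded free resolution of `k[S]`. It is not minimal: in degree `m`, the
product of `𝔪` with the `j`-chains consists of the `j`-chains of `∇_m`.

For a graded projective resolution `P` of a module, `(𝔪 P_j ∩ im ∂)_m / (𝔪 im ∂)_m`, with
`im ∂ ⊆ P_j`, does not depend on `P`, by comparison of resolutions (it is a `Tor` with `R/𝔪`). For
the complex of chains it is `H̃_j(∇_m)`, and for the minimal resolution, where `im ∂ = N_j ⊆ 𝔪 P_j`,
it is `(N_j)_m / (𝔪 N_j)_m`.
-/

section Subquotient

variable {k X Y : Type*} [CommRing k] [AddCommGroup X] [Module k X] [AddCommGroup Y] [Module k Y]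

theorem finrank_map_mkQ_eq_of_inverse_mod {V W : Submodule k X} {V' W' : Submodule k Y}
    (f : X →ₗ[k] Y) (g : Y →ₗ[k] X) (hfV : V ≤ V'.comap f) (hgV : V' ≤ V.comap g)
    (hfW : W ≤ W'.comap f) (hgW : W' ≤ W.comap g)
    (hgf : ∀ v ∈ V, g (f v) - v ∈ W) (hfg : ∀ v ∈ V', f (g v) - v ∈ W') :
    Module.finrank k (V.map W.mkQ) = Module.finrank k (V'.map W'.mkQ) := by
  have hF : ∀ x ∈ V.map W.mkQ, W.mapQ W' f hfW x ∈ V'.map W'.mkQ := by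
    rintro _ ⟨v, hv, rfl⟩
    exact ⟨f v, hfV hv, rfl⟩
  have hG : ∀ x ∈ V'.map W'.mkQ, W'.mapQ W g hgW x ∈ V.map W.mkQ := by
    rintro _ ⟨v, hv, rfl⟩
    exact ⟨g v, hgV hv, rfl⟩
  refine (LinearEquiv.ofLinearMap ((W.mapQ W' f hfW).restrict hF)
    ((W'.mapQ W g hgW).restrict hG) ?_ ?_).finrank_eq
  · ext ⟨_, v, hv, rfl⟩
    exact (Submodule.Quotient.eq W').2 (hfg v hv)
  · ext ⟨_, v, hv, rfl⟩
    exact (Submodule.Quotient.eq W).2 (hgf v hv)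

theorem finrank_map_mkQ_map_equiv (e : X ≃ₗ[k] Y) (V W : Submodule k X) :
    Module.finrank k ((V.map (e : X →ₗ[k] Y)).map (W.map (e : X →ₗ[k] Y)).mkQ) =
      Module.finrank k (V.map W.mkQ) := by
  refine (finrank_map_mkQ_eq_of_inverse_mod (e : X →ₗ[k] Y) (e.symm : Y →ₗ[k] X)
    (Submodule.le_comap_map _ _) ?_ (Submodule.le_comap_map _ _) ?_ ?_ ?_).symm
  · rintro _ ⟨v, hv, rfl⟩
    simpa using hv
  · rintro _ ⟨w, hw, rfl⟩
    simpa using hw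
  · intro v _
    simp
  · intro v _
    simp

end Subquotient

theorem smul_mem_of_mem_sub {σ τ G R A : Type*} [AddCommGroup G] [SMul R A] [SetLike σ R]
    [SetLike τ A] {𝓡 : G → σ} {𝒜 : G → τ} [SetLike.GradedSMul 𝓡 𝒜] {β γ : G} {x : R}
    (hx : x ∈ 𝓡 (γ - β)) {a : A} (ha : a ∈ 𝒜 β) : x • a ∈ 𝒜 γ := by
  simpa using SetLike.GradedSMul.smul_mem hx ha

section GradedComparison

universe u

variable {k R G ι : Type*} [CommRing k] [CommRing R] [Algebra k R]

/-- `f` preserves the degrees of the families of graded pieces `𝒜` and `ℬ`. -/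
def IsGradedMap {A B F : Type*} [AddCommGroup A] [Module k A] [AddCommGroup B] [Module k B]
    [FunLike F A B] (𝒜 : G → Submodule k A) (ℬ : G → Submodule k B) (f : F) : Prop :=
  ∀ γ, ∀ a ∈ 𝒜 γ, f a ∈ ℬ γ

section GradedPieces

variable {A B : Type*} [AddCommGroup A] [Module k A] [Module R A] [IsScalarTower k R A]
  [AddCommGroup B] [Module k B] [Module R B] [IsScalarTower k R B]

/-- The graded pieces of the image of a graded map `d` defined on a module with pieces `𝒜`. -/
def imagePieces (d : A →ₗ[R] B) (𝒜 : G → Submodule k A) (γ : G) : Submodule k B :=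
  (𝒜 γ).map (d.restrictScalars k)

theorem isGradedMap_imagePieces (d : A →ₗ[R] B) (𝒜 : G → Submodule k A) :
    IsGradedMap 𝒜 (imagePieces d 𝒜) d :=
  fun _ _ ha => Submodule.mem_map_of_mem ha

variable [AddCommGroup G]

/-- The degree-`γ` piece of `𝔪 A`, where `𝔪` is generated by elements `x i` of degree `n i` and
`A` has the graded pieces `𝒜`. -/
def irrelevantPiece (x : ι → R) (n : ι → G) (𝒜 : G → Submodule k A) (γ : G) : Submodule k A :=
  ⨆ i, (𝒜 (γ - n i)).map (Algebra.lsmul k k A (x i))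

/-- The dimension of `(𝔪 A ∩ 𝒦)_γ / (𝔪 𝒦)_γ` for a graded submodule of `A` with pieces `𝒦`. For
a projective module `A` with quotient `M = A / 𝒦`, this is the dimension of `Tor₁(M, R/𝔪)_γ`. -/
noncomputable def torDim (x : ι → R) (n : ι → G) (𝒜 𝒦 : G → Submodule k A) (γ : G) : ℕ :=
  Module.finrank k ((irrelevantPiece x n 𝒜 γ ⊓ 𝒦 γ).map (irrelevantPiece x n 𝒦 γ).mkQ)

variable {𝒜 : G → Submodule k A} {ℬ : G → Submodule k B} (x : ι → R) (n : ι → G)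

theorem smul_mem_irrelevantPiece (i : ι) {γ : G} {a : A} (ha : a ∈ 𝒜 (γ - n i)) :
    x i • a ∈ irrelevantPiece x n 𝒜 γ :=
  Submodule.mem_iSup_of_mem i ⟨a, ha, rfl⟩

theorem irrelevantPiece_le_iff {γ : G} {W : Submodule k A} :
    irrelevantPiece x n 𝒜 γ ≤ W ↔ ∀ i, ∀ a ∈ 𝒜 (γ - n i), x i • a ∈ W :=
  iSup_le_iff.trans <| forall_congr' fun _ => Submodule.map_le_iff_le_comap

theorem IsGradedMap.map_irrelevantPiece {f : A →ₗ[R] B} (hf : IsGradedMap 𝒜 ℬ f) :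
    IsGradedMap (irrelevantPiece x n 𝒜) (irrelevantPiece x n ℬ) f := by
  intro γ
  suffices irrelevantPiece x n 𝒜 γ ≤
    (irrelevantPiece x n ℬ γ).comap (f.restrictScalars k) from this
  refine (irrelevantPiece_le_iff x n).2 fun i a ha => ?_
  simpa using smul_mem_irrelevantPiece x n i (hf _ a ha)

theorem irrelevantPiece_imagePieces (d : A →ₗ[R] B) (𝒜 : G → Submodule k A) (γ : G) :
    irrelevantPiece x n (imagePieces d 𝒜) γ = imagePieces d (irrelevantPiece x n 𝒜) γ := by
  refine le_antisymm ((irrelevantPiece_le_iff x n).2 ?_) ?_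
  · rintro i _ ⟨a, ha, rfl⟩
    exact ⟨x i • a, smul_mem_irrelevantPiece x n i ha, map_smul d (x i) a⟩
  · rintro _ ⟨a, ha, rfl⟩
    exact (isGradedMap_imagePieces d 𝒜).map_irrelevantPiece x n γ a ha

end GradedPieces

variable [AddCommGroup G]

/-- The lifting property of graded projective modules: a graded map from `A` which lands piecewise
in the image of `v` factors through `v` by a graded map. -/
def HasGradedLifting {σ A : Type*} [SetLike σ R] [AddCommGroup A] [Module k A] [Module R A]
    (𝓡 : G → σ) (𝒜 : G → Submodule k A) : Prop :=
  ∀ (X Y : Type u) [AddCommGroup X] [Module k X] [Module R X] [IsScalarTower k R X]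
    [AddCommGroup Y] [Module R Y] (𝒳 : G → Submodule k X) [SetLike.GradedSMul 𝓡 𝒳]
    (w : A →ₗ[R] Y) (v : X →ₗ[R] Y), (∀ γ, ∀ a ∈ 𝒜 γ, ∃ b ∈ 𝒳 γ, v b = w a) →
    ∃ f : A →ₗ[R] X, IsGradedMap 𝒜 𝒳 f ∧ ∀ γ, ∀ a ∈ 𝒜 γ, v (f a) = w a

variable {σ : Type*} [SetLike σ R] (𝓡 : G → σ)
  {A₂ A₁ A₀ B₂ B₁ B₀ : Type u}
  [AddCommGroup A₂] [Module k A₂] [Module R A₂] [IsScalarTower k R A₂]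
  [AddCommGroup A₁] [Module k A₁] [Module R A₁] [IsScalarTower k R A₁]
  [AddCommGroup A₀] [Module k A₀] [Module R A₀] [IsScalarTower k R A₀]
  [AddCommGroup B₂] [Module k B₂] [Module R B₂] [IsScalarTower k R B₂]
  [AddCommGroup B₁] [Module k B₁] [Module R B₁] [IsScalarTower k R B₁]
  [AddCommGroup B₀] [Module k B₀] [Module R B₀] [IsScalarTower k R B₀]
  (𝒜₂ : G → Submodule k A₂) (𝒜₁ : G → Submodule k A₁) (𝒜₀ : G → Submodule k A₀)
  (ℬ₂ : G → Submodule k B₂) (ℬ₁ : G → Submodule k B₁) (ℬ₀ : G → Submodule k B₀)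

/-- `A₂ → A₁ → A₀` is a segment of a graded projective resolution: `A₁` is graded projective, and
the sequence is graded and exact at `A₁`. -/
structure IsResolutionStep (d' : A₂ →ₗ[R] A₁) (d : A₁ →ₗ[R] A₀) : Prop where
  hasGradedLifting : HasGradedLifting.{u} 𝓡 𝒜₁
  isGradedMap : IsGradedMap 𝒜₁ 𝒜₀ d
  eq_zero_iff : ∀ γ, ∀ a ∈ 𝒜₁ γ, d a = 0 ↔ a ∈ imagePieces d' 𝒜₂ γ
  isGradedMap' : IsGradedMap 𝒜₂ 𝒜₁ d'

/-- The endomorphism `φ` of `A₀` agrees with the identity on the image of `d : A₁ → A₀` up to a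
graded homotopy `A₀ → A₁`. -/
def HomotopicToId (d : A₁ →ₗ[R] A₀) (φ : A₀ →ₗ[R] A₀) : Prop :=
  ∃ h : A₀ →ₗ[R] A₁, IsGradedMap 𝒜₀ 𝒜₁ h ∧
    ∀ γ, ∀ a ∈ imagePieces d 𝒜₁ γ, d (h a) = φ a - a

/-- Two pieces `d : A₁ → A₀` and `e : B₁ → B₀` of graded complexes are related by graded maps
`A₀ ⇄ B₀` which respect the images of `d` and `e` and are mutually inverse there up to homotopy. -/
def GradedComparable (d : A₁ →ₗ[R] A₀) (e : B₁ →ₗ[R] B₀) : Prop :=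
  ∃ (f : A₀ →ₗ[R] B₀) (g : B₀ →ₗ[R] A₀),
    IsGradedMap 𝒜₀ ℬ₀ f ∧ IsGradedMap (imagePieces d 𝒜₁) (imagePieces e ℬ₁) f ∧
    IsGradedMap ℬ₀ 𝒜₀ g ∧ IsGradedMap (imagePieces e ℬ₁) (imagePieces d 𝒜₁) g ∧
    HomotopicToId 𝒜₁ 𝒜₀ d (g ∘ₗ f) ∧ HomotopicToId ℬ₁ ℬ₀ e (f ∘ₗ g)

variable {𝓡 𝒜₂ 𝒜₁ 𝒜₀ ℬ₂ ℬ₁ ℬ₀} {d : A₁ →ₗ[R] A₀} {e : B₁ →ₗ[R] B₀}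

theorem HomotopicToId.sub_mem_irrelevantPiece {φ : A₀ →ₗ[R] A₀}
    (h : HomotopicToId 𝒜₁ 𝒜₀ d φ) (x : ι → R) (n : ι → G) (γ : G) {a : A₀}
    (ha : a ∈ irrelevantPiece x n 𝒜₀ γ ⊓ imagePieces d 𝒜₁ γ) :
    φ a - a ∈ irrelevantPiece x n (imagePieces d 𝒜₁) γ := by
  obtain ⟨h, hh, hφ⟩ := h
  rw [← hφ γ a ha.2]
  exact (isGradedMap_imagePieces d 𝒜₁).map_irrelevantPiece x n γ _
    (hh.map_irrelevantPiece x n γ a ha.1)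

omit [AddCommGroup G] in
theorem GradedComparable.of_inverse (hd : IsGradedMap 𝒜₁ 𝒜₀ d) (he : IsGradedMap ℬ₁ ℬ₀ e)
    {f : A₀ →ₗ[R] B₀} {g : B₀ →ₗ[R] A₀} (hf : IsGradedMap 𝒜₀ ℬ₀ f) (hg : IsGradedMap ℬ₀ 𝒜₀ g)
    (hgf : ∀ γ, ∀ a ∈ 𝒜₀ γ, g (f a) = a) (hfg : ∀ γ, ∀ b ∈ ℬ₀ γ, f (g b) = b)
    (himage : ∀ γ, ∀ a ∈ 𝒜₀ γ, a ∈ imagePieces d 𝒜₁ γ ↔ f a ∈ imagePieces e ℬ₁ γ) :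
    GradedComparable 𝒜₁ 𝒜₀ ℬ₁ ℬ₀ d e := by
  have hd' : ∀ γ, imagePieces d 𝒜₁ γ ≤ 𝒜₀ γ := fun γ => Submodule.map_le_iff_le_comap.2 (hd γ)
  have he' : ∀ γ, imagePieces e ℬ₁ γ ≤ ℬ₀ γ := fun γ => Submodule.map_le_iff_le_comap.2 (he γ)
  refine ⟨f, g, hf, fun γ a ha => (himage γ a (hd' γ ha)).1 ha, hg, fun γ b hb => ?_,
    ⟨0, fun γ a _ => zero_mem _, fun γ a ha => ?_⟩, ⟨0, fun γ b _ => zero_mem _, fun γ b hb => ?_⟩⟩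
  · rwa [himage γ _ (hg γ b (he' γ hb)), hfg γ b (he' γ hb)]
  · simp [hgf γ a (hd' γ ha)]
  · simp [hfg γ b (he' γ hb)]

theorem GradedComparable.torDim_eq (h : GradedComparable 𝒜₁ 𝒜₀ ℬ₁ ℬ₀ d e)
    (x : ι → R) (n : ι → G) (γ : G) :
    torDim x n 𝒜₀ (imagePieces d 𝒜₁) γ = torDim x n ℬ₀ (imagePieces e ℬ₁) γ := by
  obtain ⟨f, g, hf, hf', hg, hg', hgf, hfg⟩ := h
  exact finrank_map_mkQ_eq_of_inverse_mod (f.restrictScalars k) (g.restrictScalars k)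
    (fun a ha => ⟨hf.map_irrelevantPiece x n γ a ha.1, hf' γ a ha.2⟩)
    (fun b hb => ⟨hg.map_irrelevantPiece x n γ b hb.1, hg' γ b hb.2⟩)
    (hf'.map_irrelevantPiece x n γ) (hg'.map_irrelevantPiece x n γ)
    (fun _ ha => hgf.sub_mem_irrelevantPiece x n γ ha)
    (fun _ hb => hfg.sub_mem_irrelevantPiece x n γ hb)

variable {d' : A₂ →ₗ[R] A₁} {e' : B₂ →ₗ[R] B₁}

theorem HasGradedLifting.exists_lift [SetLike.GradedSMul 𝓡 ℬ₁] (hA : HasGradedLifting.{u} 𝓡 𝒜₁)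
    {f : A₀ →ₗ[R] B₀} (hf : IsGradedMap (imagePieces d 𝒜₁) (imagePieces e ℬ₁) f) :
    ∃ F : A₁ →ₗ[R] B₁, IsGradedMap 𝒜₁ ℬ₁ F ∧ ∀ γ, ∀ a ∈ 𝒜₁ γ, e (F a) = f (d a) :=
  hA B₁ B₀ ℬ₁ (f ∘ₗ d) e fun γ a ha => hf γ (d a) (isGradedMap_imagePieces d 𝒜₁ γ a ha)

omit [IsScalarTower k R A₀] [IsScalarTower k R B₀] in
theorem IsResolutionStep.isGradedMap_imagePieces_lift
    (hA : IsResolutionStep 𝓡 𝒜₂ 𝒜₁ 𝒜₀ d' d) (hB : IsResolutionStep 𝓡 ℬ₂ ℬ₁ ℬ₀ e' e)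
    {f : A₀ →ₗ[R] B₀} {F : A₁ →ₗ[R] B₁} (hF : IsGradedMap 𝒜₁ ℬ₁ F)
    (hFf : ∀ γ, ∀ a ∈ 𝒜₁ γ, e (F a) = f (d a)) :
    IsGradedMap (imagePieces d' 𝒜₂) (imagePieces e' ℬ₂) F := by
  rintro γ _ ⟨a, ha, rfl⟩
  have ha' : d' a ∈ 𝒜₁ γ := hA.isGradedMap' γ a ha
  refine (hB.eq_zero_iff γ _ (hF γ _ ha')).1 ?_
  have hdd : d (d' a) = 0 := (hA.eq_zero_iff γ _ ha').2 ⟨a, ha, rfl⟩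
  exact (hFf γ _ ha').trans (by rw [hdd, map_zero])

theorem IsResolutionStep.homotopicToId_lift [SetLike.GradedSMul 𝓡 𝒜₂]
    (hA : IsResolutionStep 𝓡 𝒜₂ 𝒜₁ 𝒜₀ d' d) {φ : A₀ →ₗ[R] A₀} (hφ : HomotopicToId 𝒜₁ 𝒜₀ d φ)
    {Φ : A₁ →ₗ[R] A₁} (hΦ : IsGradedMap 𝒜₁ 𝒜₁ Φ)
    (hΦφ : ∀ γ, ∀ a ∈ 𝒜₁ γ, d (Φ a) = φ (d a)) : HomotopicToId 𝒜₂ 𝒜₁ d' Φ := by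
  obtain ⟨h, hh, hhφ⟩ := hφ
  obtain ⟨H, hH, hH'⟩ := hA.hasGradedLifting A₂ A₁ 𝒜₂ (Φ - LinearMap.id - h ∘ₗ d) d' <| by
    intro γ a ha
    have hda : d a ∈ imagePieces d 𝒜₁ γ := isGradedMap_imagePieces d 𝒜₁ γ a ha
    refine (hA.eq_zero_iff γ _ ?_).1 ?_
    · exact sub_mem (sub_mem (hΦ γ a ha) ha) (hh γ _ (hA.isGradedMap γ a ha))
    · simp [hΦφ γ a ha, hhφ γ _ hda]
  refine ⟨H, hH, ?_⟩
  rintro γ _ ⟨a, ha, rfl⟩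
  have ha' : d' a ∈ 𝒜₁ γ := hA.isGradedMap' γ a ha
  have hdd : d (d' a) = 0 := (hA.eq_zero_iff γ _ ha').2 ⟨a, ha, rfl⟩
  simpa [hdd] using hH' γ _ ha'

theorem GradedComparable.succ [SetLike.GradedSMul 𝓡 𝒜₂] [SetLike.GradedSMul 𝓡 𝒜₁]
    [SetLike.GradedSMul 𝓡 ℬ₂] [SetLike.GradedSMul 𝓡 ℬ₁]
    (hA : IsResolutionStep 𝓡 𝒜₂ 𝒜₁ 𝒜₀ d' d) (hB : IsResolutionStep 𝓡 ℬ₂ ℬ₁ ℬ₀ e' e)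
    (h : GradedComparable 𝒜₁ 𝒜₀ ℬ₁ ℬ₀ d e) : GradedComparable 𝒜₂ 𝒜₁ ℬ₂ ℬ₁ d' e' := by
  obtain ⟨f, g, -, hf, -, hg, hgf, hfg⟩ := h
  obtain ⟨F, hF, hFf⟩ := hA.hasGradedLifting.exists_lift hf
  obtain ⟨F', hF', hF'g⟩ := hB.hasGradedLifting.exists_lift hg
  refine ⟨F, F', hF, hA.isGradedMap_imagePieces_lift hB hF hFf,
    hF', hB.isGradedMap_imagePieces_lift hA hF' hF'g, hA.homotopicToId_lift hgf ?_ ?_,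
    hB.homotopicToId_lift hfg ?_ ?_⟩
  · exact fun γ a ha => hF' γ _ (hF γ a ha)
  · exact fun γ a ha => (hF'g γ _ (hF γ a ha)).trans (congrArg g (hFf γ a ha))
  · exact fun γ b hb => hF γ _ (hF' γ b hb)
  · exact fun γ b hb => (hFf γ _ (hF' γ b hb)).trans (congrArg f (hF'g γ b hb))

end GradedComparison

section Supported

variable {k α Y : Type*} [CommRing k] [AddCommGroup Y] [Module k Y] {s : Set α}

theorem supported_le_iff {W : Submodule k (α →₀ k)} :
    Finsupp.supported k k s ≤ W ↔ ∀ a ∈ s, Finsupp.single a 1 ∈ W := by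
  rw [Finsupp.supported_eq_span_single, Submodule.span_le]
  exact Set.forall_mem_image

theorem eqOn_supported {f g : (α →₀ k) →ₗ[k] Y}
    (h : ∀ a ∈ s, f (Finsupp.single a 1) = g (Finsupp.single a 1)) {z : α →₀ k}
    (hz : z ∈ Finsupp.supported k k s) : f z = g z :=
  supported_le_iff (W := LinearMap.eqLocus f g) |>.2 h hz

end Supported

section FullSimplex

/-- The full simplex on a possibly infinite set `C` of vertices. -/
def fullSimplex {V : Type} (C : Set V) : Set (Finset V) :=
  {F | ↑F ⊆ C}

theorem mem_sFaces_fullSimplex {V : Type} {C : Set V} {c : ℕ} {F : Finset V} :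
    F ∈ sFaces (fullSimplex C) c ↔ F.card = c ∧ ↑F ⊆ C := by
  refine and_congr_right fun _ => ⟨?_, Or.inr⟩
  rintro (rfl | hF)
  exacts [by simp, hF]

variable {k : Type} [Field k] {V : Type} [LinearOrder V]

theorem sBoundary_single (F : Finset V) :
    sBoundary k (Finsupp.single F 1) =
      ∑ x ∈ F, (-1 : k) ^ (F.filter (· < x)).card • Finsupp.single (F.erase x) 1 := by
  simp [sBoundary]

theorem sBoundary_single_map {W : Type} [LinearOrder W] (f : V ↪o W) (F : Finset V) :
    sBoundary k (Finsupp.single (F.map f.toEmbedding) 1) =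
      Finsupp.lmapDomain k k (Finset.map f.toEmbedding) (sBoundary k (Finsupp.single F 1)) := by
  rw [sBoundary_single, sBoundary_single, Finset.sum_map, map_sum]
  refine Finset.sum_congr rfl fun x _ => ?_
  have hfilter : (F.map f.toEmbedding).filter (· < f x) = (F.filter (· < x)).map f.toEmbedding := by
    simp [Finset.filter_map]
  rw [map_smul, Finsupp.lmapDomain_apply, Finsupp.mapDomain_single, Finset.map_erase,
    RelEmbedding.coe_toEmbedding, hfilter, Finset.card_map]

/-- Coning off chains with apex `a`; chains with a face containing `a` lose that face. -/
noncomputable def cone (a : V) : (Finset V →₀ k) →ₗ[k] (Finset V →₀ k) :=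
  Finsupp.lsum k fun F =>
    LinearMap.toSpanSingleton k _ (if a ∈ F then 0 else Finsupp.single (insert a F) 1)

theorem cone_single (a : V) (F : Finset V) :
    cone a (Finsupp.single F (1 : k)) = if a ∈ F then 0 else Finsupp.single (insert a F) 1 := by
  simp [cone]

theorem cone_cone (a : V) (z : Finset V →₀ k) : cone a (cone a z) = 0 := by
  suffices cone a ∘ₗ cone (k := k) a = 0 from LinearMap.congr_fun this z
  refine Finsupp.lhom_ext' fun F => LinearMap.ext_ring ?_
  by_cases ha : a ∈ F <;> simp [cone_single, ha]

theorem sBoundary_single_insert (a : V) (F : Finset V) (ha : ∀ x ∈ F, a < x) :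
    sBoundary k (Finsupp.single (insert a F) 1) =
      Finsupp.single F 1 - cone a (sBoundary k (Finsupp.single F 1)) := by
  have haF : a ∉ F := fun h => lt_irrefl a (ha a h)
  have hfilter_apex : (insert a F).filter (· < a) = ∅ := by
    refine Finset.filter_eq_empty_iff.2 fun y hy => ?_
    rcases Finset.mem_insert.1 hy with rfl | hy
    exacts [lt_irrefl y, (ha y hy).not_gt]
  rw [sBoundary_single, sBoundary_single, Finset.sum_insert haF, sub_eq_add_neg, map_sum,
    ← Finset.sum_neg_distrib]
  congr 1
  · rw [hfilter_apex, Finset.erase_insert haF, Finset.card_empty, pow_zero, one_smul]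
  · refine Finset.sum_congr rfl fun x hx => ?_
    have hfilter : a ∉ F.filter (· < x) := fun h => haF (Finset.mem_filter.1 h).1
    have herase : a ∉ F.erase x := fun h => haF (Finset.mem_of_mem_erase h)
    rw [Finset.filter_insert, if_pos (ha x hx), Finset.card_insert_of_notMem hfilter, map_smul,
      cone_single, if_neg herase, Finset.erase_insert_of_ne (ha x hx).ne, pow_succ, mul_neg_one,
      neg_smul]

theorem cone_homotopy_single {a : V} {F : Finset V} (hF : ∀ x ∈ F, a ≤ x) :
    sBoundary k (cone a (Finsupp.single F 1)) + cone a (sBoundary k (Finsupp.single F 1)) =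
      Finsupp.single F 1 := by
  by_cases ha : a ∈ F
  · obtain ⟨E, haE, rfl⟩ : ∃ E, a ∉ E ∧ F = insert a E :=
      ⟨F.erase a, Finset.notMem_erase a F, (Finset.insert_erase ha).symm⟩
    have hlt : ∀ x ∈ E, a < x := fun x hx =>
      lt_of_le_of_ne (hF x (Finset.mem_insert_of_mem hx)) fun h => haE (h ▸ hx)
    rw [cone_single, if_pos ha, map_zero, zero_add, sBoundary_single_insert a E hlt, map_sub,
      cone_cone, sub_zero, cone_single, if_neg haE]
  · have hlt : ∀ x ∈ F, a < x := fun x hx => lt_of_le_of_ne (hF x hx) fun h => ha (h ▸ hx)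
    rw [cone_single, if_neg ha, sBoundary_single_insert a F hlt, sub_add_cancel]

theorem cone_homotopy {a : V} {z : Finset V →₀ k}
    (hz : z ∈ Finsupp.supported k k {F : Finset V | ∀ x ∈ F, a ≤ x}) :
    sBoundary k (cone a z) + cone a (sBoundary k z) = z :=
  eqOn_supported (f := sBoundary k ∘ₗ cone a + cone a ∘ₗ sBoundary k) (g := LinearMap.id)
    (fun _ hF => cone_homotopy_single hF) hz

theorem sBoundary_sBoundary (z : Finset V →₀ k) : sBoundary k (sBoundary k z) = 0 := by
  suffices sBoundary k ∘ₗ sBoundary k = (0 : (Finset V →₀ k) →ₗ[k] _) from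
    LinearMap.congr_fun this z
  refine Finsupp.lhom_ext' fun F => LinearMap.ext_ring ?_
  change sBoundary k (sBoundary k (Finsupp.single F 1)) = 0
  induction F using Finset.induction_on_min with
  | empty => simp [sBoundary_single]
  | insert a F ha ih =>
    have hF : sBoundary k (Finsupp.single F 1) ∈
        Finsupp.supported k k {F : Finset V | ∀ x ∈ F, a ≤ x} := by
      rw [sBoundary_single]
      exact sum_mem fun x _ => Submodule.smul_mem _ _ <| Finsupp.single_mem_supported k 1
        fun y hy => (ha y (Finset.mem_of_mem_erase hy)).le
    have hcone := cone_homotopy hF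
    rw [ih, map_zero, add_zero] at hcone
    rw [sBoundary_single_insert a F ha, map_sub, hcone, sub_self]

theorem sBoundary_mem_supported {C : Set V} {c : ℕ} {z : Finset V →₀ k}
    (hz : z ∈ Finsupp.supported k k (sFaces (fullSimplex C) (c + 1))) :
    sBoundary k z ∈ Finsupp.supported k k (sFaces (fullSimplex C) c) := by
  refine supported_le_iff (W := (Finsupp.supported k k _).comap (sBoundary k)) |>.2
    (fun F hF => ?_) hz
  obtain ⟨hcard, hFC⟩ := mem_sFaces_fullSimplex.1 hF
  rw [Submodule.mem_comap, sBoundary_single]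
  refine sum_mem fun x hx => Submodule.smul_mem _ _ <| Finsupp.single_mem_supported k 1 <|
    mem_sFaces_fullSimplex.2 ⟨?_, (Finset.coe_subset.2 (Finset.erase_subset x F)).trans hFC⟩
  rw [Finset.card_erase_of_mem hx, hcard, Nat.add_sub_cancel]

theorem cone_mem_supported {C : Set V} {c : ℕ} {a : V} (ha : a ∈ C) {z : Finset V →₀ k}
    (hz : z ∈ Finsupp.supported k k (sFaces (fullSimplex C) c)) :
    cone a z ∈ Finsupp.supported k k (sFaces (fullSimplex C) (c + 1)) := by
  refine supported_le_iff (W := (Finsupp.supported k k _).comap (cone a)) |>.2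
    (fun F hF => ?_) hz
  obtain ⟨hcard, hFC⟩ := mem_sFaces_fullSimplex.1 hF
  rw [Submodule.mem_comap, cone_single]
  split_ifs with haF
  · exact zero_mem _
  · refine Finsupp.single_mem_supported k 1 (mem_sFaces_fullSimplex.2 ⟨?_, ?_⟩)
    · rw [Finset.card_insert_of_notMem haF, hcard]
    · rw [Finset.coe_insert]
      exact Set.insert_subset ha hFC

theorem exists_sBoundary_eq {C : Set V} {c : ℕ} {z : Finset V →₀ k}
    (hz : z ∈ Finsupp.supported k k (sFaces (fullSimplex C) (c + 1))) (hz0 : sBoundary k z = 0) :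
    ∃ y ∈ Finsupp.supported k k (sFaces (fullSimplex C) (c + 2)), sBoundary k y = z := by
  rcases eq_or_ne z 0 with rfl | hne
  · exact ⟨0, zero_mem _, map_zero _⟩
  obtain ⟨E, hE⟩ := Finsupp.support_nonempty_iff.2 hne
  have hface : ∀ F ∈ z.support, F.card = c + 1 ∧ ↑F ⊆ C := fun F hF =>
    mem_sFaces_fullSimplex.1 (hz hF)
  obtain ⟨b, hb⟩ : E.Nonempty := Finset.card_pos.1 (by rw [(hface E hE).1]; exact c.succ_pos)
  obtain ⟨a, ha, hmin⟩ := (z.support.biUnion id).exists_minimal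
    ⟨b, Finset.mem_biUnion.2 ⟨E, hE, hb⟩⟩
  obtain ⟨F, hF, haF⟩ := Finset.mem_biUnion.1 ha
  refine ⟨cone a z, cone_mem_supported ((hface F hF).2 haF) hz, ?_⟩
  have hcone : sBoundary k (cone a z) + cone a (sBoundary k z) = z :=
    cone_homotopy fun F hF x hx => (le_total a x).elim id
      (hmin (Finset.mem_biUnion.2 ⟨F, hF, hx⟩))
  rwa [hz0, map_zero, add_zero] at hcone

end FullSimplex

section MonomialChains

open Finsupp (single)

/-- Finite sets of monomials in `r` variables; a monomial is given by its exponent vector. -/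
abbrev MonomialSet (r : ℕ) : Type :=
  Finset (Lex (Fin r →₀ ℕ))

variable {r : ℕ}

/-- The set of the monomials `x ^ α * x ^ β` for `x ^ β ∈ F`. -/
noncomputable def translateSet (α : Fin r →₀ ℕ) (F : MonomialSet r) : MonomialSet r :=
  F.map (addLeftEmbedding (toLex α))

theorem mem_translateSet {α : Fin r →₀ ℕ} {F : MonomialSet r} {b : Lex (Fin r →₀ ℕ)} :
    b ∈ translateSet α F ↔ ∃ a ∈ F, toLex α + a = b := by
  simp [translateSet]

theorem translateSet_zero (F : MonomialSet r) : translateSet 0 F = F := by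
  ext b
  simp [mem_translateSet]

theorem translateSet_add (α β : Fin r →₀ ℕ) (F : MonomialSet r) :
    translateSet (α + β) F = translateSet α (translateSet β F) := by
  ext b
  simp [mem_translateSet, add_assoc]

theorem card_translateSet (α : Fin r →₀ ℕ) (F : MonomialSet r) : (translateSet α F).card = F.card :=
  Finset.card_map _

theorem translateSet_nonempty {α : Fin r →₀ ℕ} {F : MonomialSet r} :
    (translateSet α F).Nonempty ↔ F.Nonempty :=
  Finset.map_nonempty

theorem translateSet_image_sub {α : Fin r →₀ ℕ} {F : MonomialSet r} (h : ∀ a ∈ F, α ≤ ofLex a) :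
    translateSet α (F.image fun a => toLex (ofLex a - α)) = F := by
  have hadd : ∀ a ∈ F, toLex α + toLex (ofLex a - α) = a := fun a ha => by
    rw [← toLex_add, add_tsub_cancel_of_le (h a ha), toLex_ofLex]
  rw [translateSet, Finset.map_eq_image, Finset.image_image]
  exact (Finset.image_congr hadd).trans Finset.image_id

/-- The greatest common divisor of the monomials in `F`, with value `1` on the empty set. -/
noncomputable def gcdMonomial (F : MonomialSet r) : Fin r →₀ ℕ :=
  if h : F.Nonempty then F.inf' h ofLex else 0

theorem gcdMonomial_le {F : MonomialSet r} {a : Lex (Fin r →₀ ℕ)} (ha : a ∈ F) :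
    gcdMonomial F ≤ ofLex a := by
  rw [gcdMonomial, dif_pos ⟨a, ha⟩]
  exact Finset.inf'_le _ ha

theorem le_gcdMonomial {F : MonomialSet r} (hF : F.Nonempty) {α : Fin r →₀ ℕ}
    (h : ∀ a ∈ F, α ≤ ofLex a) : α ≤ gcdMonomial F := by
  rw [gcdMonomial, dif_pos hF]
  exact Finset.le_inf' hF _ h

theorem gcdMonomial_translateSet (α : Fin r →₀ ℕ) {F : MonomialSet r} (hF : F.Nonempty) :
    gcdMonomial (translateSet α F) = α + gcdMonomial F := by
  refine le_antisymm ?_ (le_gcdMonomial (translateSet_nonempty.2 hF) fun b hb => ?_)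
  · rw [← tsub_le_iff_left]
    refine le_gcdMonomial hF fun a ha => tsub_le_iff_left.2 ?_
    exact gcdMonomial_le (mem_translateSet.2 ⟨a, ha, rfl⟩)
  · obtain ⟨a, ha, rfl⟩ := mem_translateSet.1 hb
    exact add_le_add_right (gcdMonomial_le ha) α

/-- The set of monomials with greatest common divisor `1` of which `F` is a translate. -/
noncomputable def reduced (F : MonomialSet r) : MonomialSet r :=
  F.image fun a => toLex (ofLex a - gcdMonomial F)

theorem translateSet_gcdMonomial_reduced (F : MonomialSet r) :
    translateSet (gcdMonomial F) (reduced F) = F :=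
  translateSet_image_sub fun _ => gcdMonomial_le

theorem reduced_translateSet (α : Fin r →₀ ℕ) {F : MonomialSet r} (hF : F.Nonempty) :
    reduced (translateSet α F) = reduced F := by
  rw [reduced, gcdMonomial_translateSet α hF, translateSet, Finset.map_eq_image, Finset.image_image]
  refine Finset.image_congr fun a _ => congrArg toLex ?_
  exact add_tsub_add_eq_tsub_left α (ofLex a) (gcdMonomial F)

variable {G : Type} [AddCommGroup G]

/-- The set `C_γ` of the monomials of degree `γ`. -/
def monomialFiber (n : Fin r → G) (γ : G) : Set (Lex (Fin r →₀ ℕ)) :=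
  {a | Finsupp.weight n (ofLex a) = γ}

theorem translateSet_subset_monomialFiber_iff {n : Fin r → G} {γ : G} {α : Fin r →₀ ℕ}
    {F : MonomialSet r} :
    ↑(translateSet α F) ⊆ monomialFiber n γ ↔ ↑F ⊆ monomialFiber n (γ - Finsupp.weight n α) := by
  simp [Set.subset_def, mem_translateSet, monomialFiber, eq_sub_iff_add_eq']

theorem mem_nablaLex_iff {n : Fin r → G} {m : G} {F : MonomialSet r} :
    F ∈ nablaLex n m ↔ ∃ i, ∃ E : MonomialSet r, E.Nonempty ∧ ↑E ⊆ monomialFiber n (m - n i) ∧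
      translateSet (single i 1) E = F := by
  have hweight (i : Fin r) : Finsupp.weight n (single i 1) = n i := by
    rw [Finsupp.weight_single, one_smul]
  constructor
  · rintro ⟨hF, hdeg, i, hi⟩
    have htr := translateSet_image_sub fun a ha => Finsupp.single_le_iff.2 (hi a ha)
    refine ⟨i, _, hF.image _, ?_, htr⟩
    rw [← hweight i, ← translateSet_subset_monomialFiber_iff, htr]
    exact hdeg
  · rintro ⟨i, E, hE, hdeg, rfl⟩
    rw [← hweight i, ← translateSet_subset_monomialFiber_iff] at hdeg
    refine ⟨translateSet_nonempty.2 hE, hdeg, i, fun b hb => ?_⟩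
    obtain ⟨a, -, rfl⟩ := mem_translateSet.1 hb
    simp

variable (k : Type) [Field k]

/-- The action of polynomials on formal combinations of sets of monomials, by which the monomial
`x ^ α` acts as the translation by `α`. -/
noncomputable def translationAction (r : ℕ) :
    MvPolynomial (Fin r) k →ₐ[k] Module.End k (MonomialSet r →₀ k) :=
  AddMonoidAlgebra.lift k _ _
    { toFun := fun α => Finsupp.lmapDomain k k (translateSet α.toAdd)
      map_one' := by
        ext F : 2
        simp [translateSet_zero]
      map_mul' := fun α β => by
        ext F : 2
        simp [translateSet_add] }

noncomputable instance monomialChainModule (r : ℕ) :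
    Module (MvPolynomial (Fin r) k) (MonomialSet r →₀ k) :=
  Module.compHom _ (translationAction k r).toRingHom

theorem smul_chain_def (p : MvPolynomial (Fin r) k) (z : MonomialSet r →₀ k) :
    p • z = translationAction k r p z :=
  rfl

instance monomialChain_isScalarTower (r : ℕ) :
    IsScalarTower k (MvPolynomial (Fin r) k) (MonomialSet r →₀ k) where
  smul_assoc c p z := by
    rw [smul_chain_def, map_smul, LinearMap.smul_apply, smul_chain_def]

variable {k}

theorem monomial_smul (α : Fin r →₀ ℕ) (z : MonomialSet r →₀ k) :
    monomial α (1 : k) • z = Finsupp.lmapDomain k k (translateSet α) z := by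
  have hlift : translationAction k r (monomial α 1) =
      (1 : k) • Finsupp.lmapDomain k k (translateSet α) :=
    AddMonoidAlgebra.lift_single _ α 1
  rw [smul_chain_def, hlift, one_smul]

theorem monomial_smul_single (α : Fin r →₀ ℕ) (c : k) (F : MonomialSet r) :
    monomial α (1 : k) • (single F c : MonomialSet r →₀ k) = single (translateSet α F) c := by
  rw [monomial_smul, Finsupp.lmapDomain_apply, Finsupp.mapDomain_single]

theorem monomial_eq_smul_monomial_one (α : Fin r →₀ ℕ) (c : k) :
    monomial α c = c • (monomial α 1 : MvPolynomial (Fin r) k) := by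
  rw [smul_monomial, smul_eq_mul, mul_one]

variable {Y : Type*} [AddCommGroup Y] [Module k Y] [Module (MvPolynomial (Fin r) k) Y]
  [IsScalarTower k (MvPolynomial (Fin r) k) Y]

theorem map_smul_of_map_translateSet {f : (MonomialSet r →₀ k) →ₗ[k] Y}
    (hf : ∀ α F, f (single (translateSet α F) 1) = (monomial α 1 : MvPolynomial (Fin r) k) •
      f (single F 1)) (p : MvPolynomial (Fin r) k) (z : MonomialSet r →₀ k) :
    f (p • z) = p • f z := by
  have hmonomial : ∀ α, f ∘ₗ Algebra.lsmul k k _ (monomial α 1 : MvPolynomial (Fin r) k) =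
      Algebra.lsmul k k Y (monomial α 1 : MvPolynomial (Fin r) k) ∘ₗ f := fun α =>
    Finsupp.lhom_ext' fun F => LinearMap.ext_ring <|
      (congrArg f (monomial_smul_single α 1 F)).trans (hf α F)
  induction p using MvPolynomial.induction_on' with
  | monomial α c =>
    rw [monomial_eq_smul_monomial_one, smul_assoc, smul_assoc, map_smul]
    exact congrArg (c • ·) (LinearMap.congr_fun (hmonomial α) z)
  | add p q hp hq => rw [add_smul, add_smul, map_add, hp, hq]

/-- A `k`-linear map on chains which commutes with translations, as a map of modules over the
polynomial ring. -/
def linearMapOfTranslateSet (f : (MonomialSet r →₀ k) →ₗ[k] Y)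
    (hf : ∀ α F, f (single (translateSet α F) 1) = (monomial α 1 : MvPolynomial (Fin r) k) •
      f (single F 1)) : (MonomialSet r →₀ k) →ₗ[MvPolynomial (Fin r) k] Y :=
  { f with map_smul' := map_smul_of_map_translateSet hf }

-- Translation acts freely on the nonempty sets of monomials, and the reduced sets represent the
-- orbits.
theorem exists_linearMap_of_reduced {x : MonomialSet r → Y} (hx : x ∅ = 0) :
    ∃ f : (MonomialSet r →₀ k) →ₗ[MvPolynomial (Fin r) k] Y, ∀ F,
      f (single F 1) = (monomial (gcdMonomial F) 1 : MvPolynomial (Fin r) k) • x (reduced F) := by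
  let f : (MonomialSet r →₀ k) →ₗ[k] Y := Finsupp.lsum k fun F =>
    LinearMap.toSpanSingleton k Y
      ((monomial (gcdMonomial F) 1 : MvPolynomial (Fin r) k) • x (reduced F))
  have hf : ∀ F, f (single F 1) =
      (monomial (gcdMonomial F) 1 : MvPolynomial (Fin r) k) • x (reduced F) := by simp [f]
  refine ⟨linearMapOfTranslateSet f fun α F => ?_, hf⟩
  rw [hf, hf]
  rcases F.eq_empty_or_nonempty with rfl | hF
  · simp [translateSet, reduced, hx]
  · rw [gcdMonomial_translateSet α hF, reduced_translateSet α hF, ← mul_smul, monomial_mul, one_mul]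

theorem sBoundary_single_translateSet (α : Fin r →₀ ℕ) (F : MonomialSet r) :
    sBoundary k (single (translateSet α F) 1) =
      (monomial α 1 : MvPolynomial (Fin r) k) • sBoundary k (single F 1) := by
  rw [monomial_smul]
  exact sBoundary_single_map (OrderEmbedding.addLeft (toLex α)) F

/-- The simplicial boundary as a map of modules over the polynomial ring. -/
noncomputable def chainBoundary (k : Type) [Field k] (r : ℕ) :
    (MonomialSet r →₀ k) →ₗ[MvPolynomial (Fin r) k] (MonomialSet r →₀ k) :=
  linearMapOfTranslateSet (sBoundary k) sBoundary_single_translateSet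

variable (k) in
/-- The chains spanned by the sets of `j + 1` monomials of the same degree `γ`, i.e. the `j`-chains
of the full simplex on `C_γ`. -/
noncomputable def faceChains (n : Fin r → G) (j : ℕ) (γ : G) : Submodule k (MonomialSet r →₀ k) :=
  Finsupp.supported k k (sFaces (fullSimplex (monomialFiber n γ)) (j + 1))

variable {n : Fin r → G} {j : ℕ}

theorem single_mem_faceChains_iff {γ : G} {F : MonomialSet r} :
    single F 1 ∈ faceChains k n j γ ↔ F.card = j + 1 ∧ ↑F ⊆ monomialFiber n γ := by
  rw [faceChains, Finsupp.mem_supported, Finsupp.support_single _ one_ne_zero,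
    Finset.coe_singleton, Set.singleton_subset_iff, mem_sFaces_fullSimplex]

theorem faceChains_le_iff {γ : G} {W : Submodule k (MonomialSet r →₀ k)} :
    faceChains k n j γ ≤ W ↔ ∀ F, single F 1 ∈ faceChains k n j γ → single F 1 ∈ W := by
  refine supported_le_iff.trans <| forall_congr' fun F => ?_
  rw [single_mem_faceChains_iff, mem_sFaces_fullSimplex]

theorem single_translateSet_mem_faceChains_iff {γ : G} {α : Fin r →₀ ℕ} {F : MonomialSet r} :
    single (translateSet α F) 1 ∈ faceChains k n j γ ↔
      single F 1 ∈ faceChains k n j (γ - Finsupp.weight n α) := by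
  rw [single_mem_faceChains_iff, single_mem_faceChains_iff, card_translateSet,
    translateSet_subset_monomialFiber_iff]

instance faceChains_gradedSMul :
    SetLike.GradedSMul (weightedHomogeneousSubmodule k n) (faceChains k n j) where
  smul_mem {β γ p z} hp hz := by
    have hle : faceChains k n j γ ≤
        (faceChains k n j (β + γ)).comap (Algebra.lsmul k k _ p) := by
      refine faceChains_le_iff.2 fun F hF => ?_
      change p • (single F 1 : MonomialSet r →₀ k) ∈ faceChains k n j (β + γ)
      rw [p.as_sum, Finset.sum_smul]
      refine sum_mem fun α hα => ?_
      have hαβ : Finsupp.weight n α = β := hp (mem_support_iff.1 hα)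
      rw [monomial_eq_smul_monomial_one, smul_assoc, monomial_smul_single]
      refine Submodule.smul_mem _ _ ?_
      rwa [single_translateSet_mem_faceChains_iff, hαβ, add_sub_cancel_left]
    exact hle hz

theorem eq_of_single_mem_faceChains {γ γ' : G} {F : MonomialSet r}
    (h : single F 1 ∈ faceChains k n j γ) (h' : single F 1 ∈ faceChains k n j γ') : γ = γ' := by
  rw [single_mem_faceChains_iff] at h h'
  obtain ⟨a, ha⟩ : F.Nonempty := Finset.card_pos.1 (by rw [h.1]; exact j.succ_pos)
  exact (h.2 ha).symm.trans (h'.2 ha)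

theorem exists_single_lift {X Z : Type*} [AddCommGroup X] [Module k X] [AddCommGroup Z]
    {𝒳 : G → Submodule k X} {v : X → Z} {w : (MonomialSet r →₀ k) → Z}
    (hvw : ∀ γ, ∀ a ∈ faceChains k n j γ, ∃ b ∈ 𝒳 γ, v b = w a) :
    ∃ x : MonomialSet r → X, x ∅ = 0 ∧ ∀ γ F, single F 1 ∈ faceChains k n j γ →
      x F ∈ 𝒳 γ ∧ v (x F) = w (single F 1) := by
  suffices ∀ F : MonomialSet r, ∃ x : X, (F = ∅ → x = 0) ∧
      ∀ γ, single F 1 ∈ faceChains k n j γ → x ∈ 𝒳 γ ∧ v x = w (single F 1) by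
    choose x hx hlift using this
    exact ⟨x, hx ∅ rfl, fun γ F => hlift F γ⟩
  intro F
  by_cases hF : ∃ γ, single F 1 ∈ faceChains k n j γ
  · obtain ⟨γ, hγ⟩ := hF
    obtain ⟨x, hx, hvx⟩ := hvw γ _ hγ
    refine ⟨x, ?_, fun γ' hγ' => ⟨eq_of_single_mem_faceChains hγ hγ' ▸ hx, hvx⟩⟩
    rintro rfl
    simp [single_mem_faceChains_iff] at hγ
  · exact ⟨0, fun _ => rfl, fun γ hγ => (hF ⟨γ, hγ⟩).elim⟩

theorem hasGradedLifting_faceChains (n : Fin r → G) (j : ℕ) :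
    HasGradedLifting.{0} (weightedHomogeneousSubmodule k n) (faceChains k n j) := by
  intro X Z _ _ _ _ _ _ 𝒳 _ w v hvw
  obtain ⟨x, hx, hlift⟩ := exists_single_lift hvw
  obtain ⟨f, hf⟩ := exists_linearMap_of_reduced (k := k) hx
  have hsingle : ∀ γ (F : MonomialSet r), single F 1 ∈ faceChains k n j γ →
      f (single F 1) ∈ 𝒳 γ ∧ v (f (single F 1)) = w (single F 1) := by
    intro γ F hF
    rw [← translateSet_gcdMonomial_reduced F, single_translateSet_mem_faceChains_iff] at hF
    obtain ⟨hmem, hvx⟩ := hlift _ _ hF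
    rw [hf]
    constructor
    · have hgcd : monomial (gcdMonomial F) (1 : k) ∈
          weightedHomogeneousSubmodule k n (γ - (γ - Finsupp.weight n (gcdMonomial F))) :=
        isWeightedHomogeneous_monomial n _ _ (sub_sub_cancel _ _).symm
      exact smul_mem_of_mem_sub hgcd hmem
    · rw [map_smul, hvx, ← map_smul, monomial_smul_single, translateSet_gcdMonomial_reduced]
  refine ⟨f, fun γ => ?_, fun γ z hz => ?_⟩
  · exact faceChains_le_iff (W := (𝒳 γ).comap (f.restrictScalars k)) |>.2
      fun F hF => (hsingle γ F hF).1
  · let K : Submodule k (MonomialSet r →₀ k) := (LinearMap.eqLocus (v ∘ₗ f) w).restrictScalars k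
    exact faceChains_le_iff (W := K) |>.2 (fun F hF => (hsingle γ F hF).2) hz

theorem isGradedMap_chainBoundary (n : Fin r → G) (j : ℕ) :
    IsGradedMap (faceChains k n (j + 1)) (faceChains k n j) (chainBoundary k r) :=
  fun _ _ hz => sBoundary_mem_supported hz

theorem mem_imagePieces_chainBoundary_iff {γ : G} {z : MonomialSet r →₀ k}
    (hz : z ∈ faceChains k n j γ) :
    z ∈ imagePieces (chainBoundary k r) (faceChains k n (j + 1)) γ ↔ chainBoundary k r z = 0 := by
  refine ⟨?_, exists_sBoundary_eq hz⟩
  rintro ⟨y, -, rfl⟩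
  exact sBoundary_sBoundary y

theorem isResolutionStep_chainBoundary (n : Fin r → G) (j : ℕ) :
    IsResolutionStep (weightedHomogeneousSubmodule k n) (faceChains k n (j + 2))
      (faceChains k n (j + 1)) (faceChains k n j) (chainBoundary k r) (chainBoundary k r) where
  hasGradedLifting := hasGradedLifting_faceChains n (j + 1)
  isGradedMap := isGradedMap_chainBoundary n j
  eq_zero_iff _ _ hz := (mem_imagePieces_chainBoundary_iff hz).symm
  isGradedMap' := isGradedMap_chainBoundary n (j + 1)

theorem irrelevantPiece_faceChains (n : Fin r → G) (j : ℕ) (m : G) :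
    irrelevantPiece (X : Fin r → MvPolynomial (Fin r) k) n (faceChains k n j) m =
      Finsupp.supported k k (sFaces (nablaLex n m) (j + 1)) := by
  apply le_antisymm
  · refine (irrelevantPiece_le_iff X n).2 fun i => ?_
    suffices hle : faceChains k n j (m - n i) ≤
        (Finsupp.supported k k (sFaces (nablaLex n m) (j + 1))).comap
          (Algebra.lsmul k k (MonomialSet r →₀ k) (X i : MvPolynomial (Fin r) k)) from
      fun a ha => hle ha
    refine faceChains_le_iff.2 fun E hE => ?_
    obtain ⟨hcard, hdeg⟩ := single_mem_faceChains_iff.1 hE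
    have hne : E.Nonempty := Finset.card_pos.1 (by rw [hcard]; exact j.succ_pos)
    change monomial (single i 1) (1 : k) • (single E 1 : MonomialSet r →₀ k) ∈
      Finsupp.supported k k (sFaces (nablaLex n m) (j + 1))
    rw [monomial_smul_single]
    exact Finsupp.single_mem_supported k 1
      ⟨(card_translateSet _ E).trans hcard, Or.inr (mem_nablaLex_iff.2 ⟨i, E, hne, hdeg, rfl⟩)⟩
  · refine supported_le_iff.2 ?_
    rintro F ⟨hcard, rfl | hF⟩
    · simp at hcard
    · obtain ⟨i, E, -, hdeg, rfl⟩ := mem_nablaLex_iff.1 hF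
      rw [← monomial_smul_single]
      refine smul_mem_irrelevantPiece X n i (single_mem_faceChains_iff.2 ⟨?_, hdeg⟩)
      rwa [card_translateSet] at hcard

theorem supported_nablaLex_le_faceChains (n : Fin r → G) (j : ℕ) (m : G) :
    Finsupp.supported k k (sFaces (nablaLex n m) (j + 1)) ≤ faceChains k n j m := by
  refine Finsupp.supported_mono ?_
  rintro F ⟨hcard, hF⟩
  exact ⟨hcard, hF.imp_right fun h => h.2.1⟩

theorem finrank_sHred_nablaLex (n : Fin r → G) (j : ℕ) (m : G) :
    Module.finrank k (sHred k (nablaLex n m) j) =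
      torDim (X : Fin r → MvPolynomial (Fin r) k) n (faceChains k n j)
        (imagePieces (chainBoundary k r) (faceChains k n (j + 1))) m := by
  have hcycles : irrelevantPiece (X : Fin r → MvPolynomial (Fin r) k) n (faceChains k n j) m ⊓
      imagePieces (chainBoundary k r) (faceChains k n (j + 1)) m = sCycles k (nablaLex n m) j := by
    rw [irrelevantPiece_faceChains]
    exact Submodule.ext fun z => and_congr_right fun hz =>
      mem_imagePieces_chainBoundary_iff (supported_nablaLex_le_faceChains n j m hz)
  have hboundaries : irrelevantPiece (X : Fin r → MvPolynomial (Fin r) k) n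
      (imagePieces (chainBoundary k r) (faceChains k n (j + 1))) m =
        sBoundaries k (nablaLex n m) j := by
    rw [irrelevantPiece_imagePieces, imagePieces, irrelevantPiece_faceChains]
    rfl
  rw [torDim, hcycles, hboundaries, sHred]

end MonomialChains

section ShiftedPieces

variable {G : Type} [AddCommGroup G] {k : Type} [Field k] {r c c' : ℕ} {n : Fin r → G}

theorem weightedHomogeneousComponent_mul_of_right_mem {β : G} (γ : G)
    (p : MvPolynomial (Fin r) k) {q : MvPolynomial (Fin r) k}
    (hq : q ∈ weightedHomogeneousSubmodule k n β) :
    weightedHomogeneousComponent n γ (p * q) = weightedHomogeneousComponent n (γ - β) p * q := by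
  classical
  let := weightedGradedAlgebra k n
  rw [← weightedDecomposition.decompose'_apply, ← weightedDecomposition.decompose'_apply]
  have hmul := DirectSum.coe_decompose_mul_add_of_right_mem _ (i := γ - β) (a := p) hq
  rwa [sub_add_cancel] at hmul

theorem mem_shiftedPiece_iff {d : Fin c → G} {γ : G} {q : Fin c → MvPolynomial (Fin r) k} :
    q ∈ shiftedPiece k n d γ ↔ ∀ i, q i ∈ weightedHomogeneousSubmodule k n (γ - d i) := by
  simp [shiftedPiece, Submodule.mem_pi]

theorem single_mem_shiftedPiece (d : Fin c → G) (e : Fin c) :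
    (Pi.single e 1 : Fin c → MvPolynomial (Fin r) k) ∈ shiftedPiece k n d (d e) := by
  refine mem_shiftedPiece_iff.2 fun i => ?_
  rcases eq_or_ne i e with rfl | hi
  · rw [Pi.single_eq_same, sub_self]
    exact isWeightedHomogeneous_one k n
  · rw [Pi.single_eq_of_ne hi]
    exact zero_mem _

variable (n) in
/-- The projection of `R^c`, with degree shifts `d`, onto its degree-`γ` piece. -/
noncomputable def shiftedComponent (d : Fin c → G) (γ : G) :
    (Fin c → MvPolynomial (Fin r) k) →ₗ[k] (Fin c → MvPolynomial (Fin r) k) :=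
  LinearMap.pi fun i => weightedHomogeneousComponent n (γ - d i) ∘ₗ LinearMap.proj i

theorem shiftedComponent_apply (d : Fin c → G) (γ : G) (q : Fin c → MvPolynomial (Fin r) k)
    (i : Fin c) : shiftedComponent n d γ q i = weightedHomogeneousComponent n (γ - d i) (q i) :=
  rfl

theorem shiftedComponent_mem (d : Fin c → G) (γ : G) (q : Fin c → MvPolynomial (Fin r) k) :
    shiftedComponent n d γ q ∈ shiftedPiece k n d γ :=
  mem_shiftedPiece_iff.2 fun i => weightedHomogeneousComponent_mem n (q i) (γ - d i)

theorem shiftedComponent_of_mem {d : Fin c → G} {γ : G} {q : Fin c → MvPolynomial (Fin r) k}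
    (hq : q ∈ shiftedPiece k n d γ) : shiftedComponent n d γ q = q := by
  classical
  funext i
  rw [shiftedComponent_apply, weightedHomogeneousComponent_of_mem (mem_shiftedPiece_iff.1 hq i),
    if_pos rfl]

theorem shiftedComponent_smul_of_left_mem {d : Fin c → G} {β : G} (γ : G)
    {p : MvPolynomial (Fin r) k} (hp : p ∈ weightedHomogeneousSubmodule k n β)
    (q : Fin c → MvPolynomial (Fin r) k) :
    shiftedComponent n d γ (p • q) = p • shiftedComponent n d (γ - β) q := by
  funext i
  simp only [shiftedComponent_apply, Pi.smul_apply, smul_eq_mul]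
  rw [mul_comm, weightedHomogeneousComponent_mul_of_right_mem _ _ hp, mul_comm, sub_right_comm]

theorem shiftedComponent_smul_of_right_mem {d : Fin c → G} {β : G} (γ : G)
    (p : MvPolynomial (Fin r) k) {q : Fin c → MvPolynomial (Fin r) k}
    (hq : q ∈ shiftedPiece k n d β) :
    shiftedComponent n d γ (p • q) = weightedHomogeneousComponent n (γ - β) p • q := by
  funext i
  simp only [shiftedComponent_apply, Pi.smul_apply, smul_eq_mul]
  rw [weightedHomogeneousComponent_mul_of_right_mem _ _ (mem_shiftedPiece_iff.1 hq i),
    sub_sub_sub_cancel_right]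

theorem map_eq_sum_smul_single {R M : Type*} [CommRing R] [AddCommGroup M] [Module R M]
    (f : (Fin c → R) →ₗ[R] M) (q : Fin c → R) : f q = ∑ e, q e • f (Pi.single e 1) := by
  conv_lhs => rw [pi_eq_sum_univ' q, map_sum]
  exact Finset.sum_congr rfl fun e _ => map_smul f _ _

instance shiftedPiece_gradedSMul (d : Fin c → G) :
    SetLike.GradedSMul (weightedHomogeneousSubmodule k n) (shiftedPiece k n d) where
  smul_mem {β γ p q} hp hq := mem_shiftedPiece_iff.2 fun i => by
    have hpq : p * q i ∈ weightedHomogeneousSubmodule k n (β + (γ - d i)) :=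
      IsWeightedHomogeneous.mul hp (mem_shiftedPiece_iff.1 hq i)
    rwa [← add_sub_assoc] at hpq

theorem hasGradedLifting_shiftedPiece (d : Fin c → G) :
    HasGradedLifting.{0} (weightedHomogeneousSubmodule k n) (shiftedPiece k n d) := by
  intro X Y _ _ _ _ _ _ 𝒳 _ w v hvw
  choose x hx hvx using fun e => hvw (d e) _ (single_mem_shiftedPiece d e)
  refine ⟨Fintype.linearCombination (MvPolynomial (Fin r) k) x, fun γ q hq => ?_, fun γ q _ => ?_⟩
  · rw [Fintype.linearCombination_apply]
    exact sum_mem fun e _ => smul_mem_of_mem_sub (mem_shiftedPiece_iff.1 hq e) (hx e)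
  · rw [Fintype.linearCombination_apply, map_sum, map_eq_sum_smul_single w q]
    exact Finset.sum_congr rfl fun e _ => by rw [map_smul, hvx]

variable {d : Fin c → G} {d' : Fin c' → G}
  {f : (Fin c → MvPolynomial (Fin r) k) →ₗ[MvPolynomial (Fin r) k]
    (Fin c' → MvPolynomial (Fin r) k)}

theorem shiftedComponent_map (hf : ∀ e, f (Pi.single e 1) ∈ shiftedPiece k n d' (d e)) (γ : G)
    (q : Fin c → MvPolynomial (Fin r) k) :
    shiftedComponent n d' γ (f q) = f (shiftedComponent n d γ q) := by
  rw [map_eq_sum_smul_single f q, map_eq_sum_smul_single f (shiftedComponent n d γ q), map_sum]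
  exact Finset.sum_congr rfl fun e _ => shiftedComponent_smul_of_right_mem γ (q e) (hf e)

theorem isGradedMap_shiftedPiece (hf : ∀ e, f (Pi.single e 1) ∈ shiftedPiece k n d' (d e)) :
    IsGradedMap (shiftedPiece k n d) (shiftedPiece k n d') f := by
  intro γ q hq
  rw [← shiftedComponent_of_mem hq, ← shiftedComponent_map hf]
  exact shiftedComponent_mem d' γ (f q)

theorem imagePieces_shiftedPiece (hf : ∀ e, f (Pi.single e 1) ∈ shiftedPiece k n d' (d e)) :
    imagePieces f (shiftedPiece k n d) = fun γ =>
      (LinearMap.range f).restrictScalars k ⊓ shiftedPiece k n d' γ := by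
  funext γ
  refine le_antisymm ?_ ?_
  · rintro _ ⟨q, hq, rfl⟩
    exact ⟨⟨q, rfl⟩, isGradedMap_shiftedPiece hf γ q hq⟩
  · rintro _ ⟨⟨q, rfl⟩, hq⟩
    refine ⟨shiftedComponent n d γ q, shiftedComponent_mem d γ q, ?_⟩
    rw [LinearMap.restrictScalars_apply, ← shiftedComponent_map hf, shiftedComponent_of_mem hq]

theorem irrelevantPiece_inf_shiftedPiece
    {N : Submodule (MvPolynomial (Fin r) k) (Fin c → MvPolynomial (Fin r) k)}
    (hN : ∀ γ, ∀ q ∈ N, shiftedComponent n d γ q ∈ N) (γ : G) :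
    irrelevantPiece (X : Fin r → MvPolynomial (Fin r) k) n
        (fun γ => N.restrictScalars k ⊓ shiftedPiece k n d γ) γ =
      (Ideal.span (Set.range (X : Fin r → MvPolynomial (Fin r) k)) • N).restrictScalars k ⊓
        shiftedPiece k n d γ := by
  have hX (i : Fin r) : (X i : MvPolynomial (Fin r) k) ∈ weightedHomogeneousSubmodule k n (n i) :=
    isWeightedHomogeneous_X k n i
  refine le_antisymm (le_inf ((irrelevantPiece_le_iff X n).2 fun i q hq => ?_)
    ((irrelevantPiece_le_iff X n).2 fun i q hq => ?_)) ?_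
  · rw [Submodule.restrictScalars_mem]
    exact Submodule.smul_mem_smul (Ideal.subset_span (Set.mem_range_self i)) hq.1
  · exact smul_mem_of_mem_sub (by rw [sub_sub_cancel]; exact hX i) hq.2
  · intro q hq
    obtain ⟨hq, hqγ⟩ := Submodule.mem_inf.1 hq
    rw [Submodule.restrictScalars_mem, Submodule.span_smul_eq, Submodule.set_smul_eq_iSup,
      iSup_range] at hq
    rw [← shiftedComponent_of_mem hqγ]
    refine Submodule.iSup_induction _ (motive := fun q => shiftedComponent n d γ q ∈ _) hq
      ?_ ?_ ?_
    · rintro i _ ⟨q, hq, rfl⟩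
      change shiftedComponent n d γ ((X i : MvPolynomial (Fin r) k) • q) ∈ _
      rw [shiftedComponent_smul_of_left_mem γ (hX i)]
      exact smul_mem_irrelevantPiece X n i ⟨hN _ q hq, shiftedComponent_mem d _ q⟩
    · rw [map_zero]
      exact zero_mem _
    · intro q q' hq hq'
      rw [map_add]
      exact add_mem hq hq'

theorem mem_ideal_smul_top_of_apply_mem {R : Type*} [CommRing R] {I : Ideal R} {q : Fin c → R}
    (hq : ∀ i, q i ∈ I) : q ∈ I • (⊤ : Submodule R (Fin c → R)) := by
  rw [pi_eq_sum_univ' q]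
  exact sum_mem fun i _ => Submodule.smul_mem_smul (hq i) trivial

theorem torDim_shiftedPiece_range
    (hf : ∀ e, f (Pi.single e 1) ∈ shiftedPiece k n d' (d e))
    (hmin : ∀ e i, f (Pi.single e 1) i ∈
      Ideal.span (Set.range (X : Fin r → MvPolynomial (Fin r) k))) (m : G) :
    torDim (X : Fin r → MvPolynomial (Fin r) k) n (shiftedPiece k n d')
        (imagePieces f (shiftedPiece k n d)) m =
      multigradedBetti k n d' m (LinearMap.range f) := by
  have hstable : ∀ γ, ∀ q ∈ LinearMap.range f, shiftedComponent n d' γ q ∈ LinearMap.range f := by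
    rintro γ _ ⟨q, rfl⟩
    exact ⟨_, (shiftedComponent_map hf γ q).symm⟩
  have htop := irrelevantPiece_inf_shiftedPiece (k := k) (n := n) (d := d') (N := ⊤)
    (fun _ _ _ => trivial) m
  simp only [Submodule.restrictScalars_top, top_inf_eq] at htop
  have hrange : LinearMap.range f ≤
      Ideal.span (Set.range (X : Fin r → MvPolynomial (Fin r) k)) • ⊤ := by
    rintro _ ⟨q, rfl⟩
    rw [map_eq_sum_smul_single f q]
    exact sum_mem fun e _ => Submodule.smul_mem _ _ (mem_ideal_smul_top_of_apply_mem (hmin e))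
  rw [torDim, imagePieces_shiftedPiece hf, irrelevantPiece_inf_shiftedPiece hstable, htop,
    inf_eq_right.2 (inf_le_inf_right _ fun q hq => hrange hq), multigradedBetti]

theorem isResolutionStep_shiftedPiece {c'' : ℕ} {d'' : Fin c'' → G}
    {g : (Fin c' → MvPolynomial (Fin r) k) →ₗ[MvPolynomial (Fin r) k]
      (Fin c'' → MvPolynomial (Fin r) k)}
    (hf : ∀ e, f (Pi.single e 1) ∈ shiftedPiece k n d' (d e))
    (hg : ∀ e, g (Pi.single e 1) ∈ shiftedPiece k n d'' (d' e))
    (hfg : LinearMap.range f = LinearMap.ker g) :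
    IsResolutionStep (weightedHomogeneousSubmodule k n) (shiftedPiece k n d) (shiftedPiece k n d')
      (shiftedPiece k n d'') f g where
  hasGradedLifting := hasGradedLifting_shiftedPiece d'
  isGradedMap := isGradedMap_shiftedPiece hg
  eq_zero_iff γ q hq := by
    rw [imagePieces_shiftedPiece hf, hfg]
    exact ⟨fun h => ⟨h, hq⟩, And.left⟩
  isGradedMap' := isGradedMap_shiftedPiece hf

end ShiftedPieces

section Augmentation

open Finsupp (single)

variable {k : Type} [Field k] {r : ℕ} {G : Type} [AddCommGroup G] {n : Fin r → G}

theorem aeval_single_monomial {T : Type*} [AddCommMonoid T] (t : Fin r → T) (α : Fin r →₀ ℕ)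
    (c : k) : aeval (fun i => AddMonoidAlgebra.single (t i) (1 : k)) (monomial α c) =
      AddMonoidAlgebra.single (Finsupp.weight t α) c := by
  simp [aeval_monomial, Finsupp.weight_apply, Finsupp.prod, Finsupp.sum,
    AddMonoidAlgebra.single_pow, AddMonoidAlgebra.prod_single]

theorem aeval_single_of_isWeightedHomogeneous {T : Type*} [AddCommMonoid T] {t : Fin r → T}
    {τ : T} {p : MvPolynomial (Fin r) k} (hp : IsWeightedHomogeneous t p τ) :
    aeval (fun i => AddMonoidAlgebra.single (t i) (1 : k)) p =
      AddMonoidAlgebra.single τ (eval 1 p) := by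
  conv_lhs => rw [p.as_sum, map_sum]
  have hα : ∀ α ∈ p.support, aeval (fun i => AddMonoidAlgebra.single (t i) (1 : k))
      (monomial α (coeff α p)) = AddMonoidAlgebra.single τ (coeff α p) := fun α hα => by
    rw [aeval_single_monomial, hp (mem_support_iff.1 hα)]
  rw [Finset.sum_congr rfl hα, eval_eq, ← AddMonoidAlgebra.singleAddHom_apply, map_sum]
  simp

theorem aeval_single_eq_zero_iff {S : AddSubmonoid G} (hmem : ∀ i, n i ∈ S) {γ : G}
    {p : MvPolynomial (Fin r) k} (hp : p ∈ weightedHomogeneousSubmodule k n γ) :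
    aeval (fun i => AddMonoidAlgebra.single (⟨n i, hmem i⟩ : S) (1 : k)) p = 0 ↔ eval 1 p = 0 := by
  rcases eq_or_ne p 0 with rfl | hp0
  · simp
  obtain ⟨β, hβ⟩ := ne_zero_iff.1 hp0
  have hweight (α : Fin r →₀ ℕ) :
      ((Finsupp.weight (fun i => (⟨n i, hmem i⟩ : S)) α : S) : G) = Finsupp.weight n α := by
    simp [Finsupp.weight_apply, Finsupp.sum]
  have hpt : IsWeightedHomogeneous (fun i => (⟨n i, hmem i⟩ : S)) p
      (Finsupp.weight (fun i => (⟨n i, hmem i⟩ : S)) β) := fun α hα =>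
    Subtype.ext <| by rw [hweight, hweight, hp hα, hp hβ]
  rw [aeval_single_of_isWeightedHomogeneous hpt, AddMonoidAlgebra.single_eq_zero]

theorem smul_single_empty (p : MvPolynomial (Fin r) k) :
    p • (single ∅ 1 : MonomialSet r →₀ k) = single ∅ (eval 1 p) := by
  induction p using MvPolynomial.induction_on' with
  | monomial α c =>
    rw [monomial_eq_smul_monomial_one, smul_assoc, monomial_smul_single]
    simp [translateSet, eval_monomial]
  | add p q hp hq => rw [add_smul, hp, hq, map_add, Finsupp.single_add]

/-- The map from `R = R^1` to chains which sends `x ^ α` to the vertex `α`; it identifies `R` with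
the `0`-chains. -/
noncomputable def vertexChain (k : Type) [Field k] (r : ℕ) :
    (Fin 1 → MvPolynomial (Fin r) k) →ₗ[MvPolynomial (Fin r) k] (MonomialSet r →₀ k) :=
  LinearMap.toSpanSingleton _ _ (single {0} 1) ∘ₗ LinearMap.proj 0

theorem vertexChain_apply (w : Fin 1 → MvPolynomial (Fin r) k) :
    vertexChain k r w = w 0 • single {0} 1 :=
  rfl

theorem chainBoundary_vertexChain (w : Fin 1 → MvPolynomial (Fin r) k) :
    chainBoundary k r (vertexChain k r w) = single ∅ (eval 1 (w 0)) := by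
  have hvertex : chainBoundary k r (single {0} 1) = single ∅ 1 := by
    refine (sBoundary_single {0}).trans ?_
    simp [Finset.filter_singleton]
  rw [vertexChain_apply, map_smul, hvertex, smul_single_empty]

/-- The linear map from chains to `R = R^1` sending a set of monomials to their sum, which inverts
`vertexChain` on the `0`-chains. -/
noncomputable def monomialSum (k : Type) [Field k] (r : ℕ) :
    (MonomialSet r →₀ k) →ₗ[MvPolynomial (Fin r) k] (Fin 1 → MvPolynomial (Fin r) k) :=
  linearMapOfTranslateSet
    (Finsupp.lsum k fun F =>
      LinearMap.toSpanSingleton k _ fun _ => ∑ a ∈ F, monomial (ofLex a) 1)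
    fun α F => by
      funext _
      simp [translateSet, Finset.mul_sum, monomial_mul]

theorem monomialSum_single_singleton (a : Lex (Fin r →₀ ℕ)) :
    monomialSum k r (single {a} 1) = fun _ => monomial (ofLex a) 1 := by
  simp [monomialSum, linearMapOfTranslateSet]

theorem monomialSum_vertexChain (w : Fin 1 → MvPolynomial (Fin r) k) :
    monomialSum k r (vertexChain k r w) = w := by
  rw [vertexChain_apply, map_smul, monomialSum_single_singleton]
  refine funext (Fin.forall_fin_one.2 ?_)
  exact mul_one (w 0)

theorem vertexChain_monomial (a : Lex (Fin r →₀ ℕ)) :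
    vertexChain k r (fun _ => monomial (ofLex a) 1) = single {a} 1 := by
  rw [vertexChain_apply, monomial_smul_single]
  simp [translateSet]

theorem vertexChain_monomialSum {γ : G} {z : MonomialSet r →₀ k} (hz : z ∈ faceChains k n 0 γ) :
    vertexChain k r (monomialSum k r z) = z := by
  let K : Submodule k (MonomialSet r →₀ k) :=
    (LinearMap.eqLocus (vertexChain k r ∘ₗ monomialSum k r) LinearMap.id).restrictScalars k
  refine (faceChains_le_iff (W := K)).2 (fun F hF => ?_) hz
  obtain ⟨a, rfl⟩ := Finset.card_eq_one.1 (single_mem_faceChains_iff.1 hF).1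
  exact (congrArg _ (monomialSum_single_singleton a)).trans (vertexChain_monomial a)

theorem isGradedMap_vertexChain (n : Fin r → G) :
    IsGradedMap (shiftedPiece k n fun _ : Fin 1 => 0) (faceChains k n 0) (vertexChain k r) := by
  intro γ w hw
  have hzero : (single {0} 1 : MonomialSet r →₀ k) ∈ faceChains k n 0 0 :=
    single_mem_faceChains_iff.2 ⟨rfl, by simp [monomialFiber]⟩
  exact smul_mem_of_mem_sub (mem_shiftedPiece_iff.1 hw 0) hzero

theorem isGradedMap_monomialSum (n : Fin r → G) :
    IsGradedMap (faceChains k n 0) (shiftedPiece k n fun _ : Fin 1 => 0) (monomialSum k r) := by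
  intro γ
  refine faceChains_le_iff (W := (shiftedPiece k n (fun _ : Fin 1 => 0) γ).comap
    ((monomialSum k r).restrictScalars k)) |>.2 fun F hF => ?_
  obtain ⟨hcard, hdeg⟩ := single_mem_faceChains_iff.1 hF
  obtain ⟨a, rfl⟩ := Finset.card_eq_one.1 hcard
  change monomialSum k r (single {a} 1) ∈ shiftedPiece k n (fun _ : Fin 1 => 0) γ
  rw [monomialSum_single_singleton, mem_shiftedPiece_iff]
  intro _
  rw [sub_zero]
  exact isWeightedHomogeneous_monomial n _ _ (hdeg (Finset.mem_singleton_self a))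

theorem single_mem_shiftedPiece_pi {c : ℕ} {d : Fin c → G}
    {π : (Fin c → MvPolynomial (Fin r) k) →ₗ[MvPolynomial (Fin r) k] MvPolynomial (Fin r) k}
    (hπ : ∀ e, π (Pi.single e 1) ∈ weightedHomogeneousSubmodule k n (d e)) (e : Fin c) :
    LinearMap.pi (fun _ : Fin 1 => π) (Pi.single e 1) ∈
      shiftedPiece k n (fun _ : Fin 1 => 0) (d e) :=
  mem_shiftedPiece_iff.2 fun _ => by simpa using hπ e

theorem gradedComparable_vertexChain {S : AddSubmonoid G} (hmem : ∀ i, n i ∈ S) {c : ℕ}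
    {d : Fin c → G}
    {π : (Fin c → MvPolynomial (Fin r) k) →ₗ[MvPolynomial (Fin r) k] MvPolynomial (Fin r) k}
    (hπ : ∀ e, π (Pi.single e 1) ∈ weightedHomogeneousSubmodule k n (d e))
    (hrange : ∀ p, p ∈ LinearMap.range π ↔
      aeval (fun i => AddMonoidAlgebra.single (⟨n i, hmem i⟩ : S) (1 : k)) p = 0) :
    GradedComparable (shiftedPiece k n d) (shiftedPiece k n fun _ : Fin 1 => 0)
      (faceChains k n 1) (faceChains k n 0) (LinearMap.pi fun _ : Fin 1 => π)
      (chainBoundary k r) := by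
  refine .of_inverse (isGradedMap_shiftedPiece (single_mem_shiftedPiece_pi hπ))
    (isGradedMap_chainBoundary n 0) (isGradedMap_vertexChain n) (isGradedMap_monomialSum n)
    (fun _ w _ => monomialSum_vertexChain w) (fun _ _ hz => vertexChain_monomialSum hz)
    fun γ w hw => ?_
  have hw0 : w 0 ∈ weightedHomogeneousSubmodule k n γ := by
    simpa using mem_shiftedPiece_iff.1 hw 0
  calc
    w ∈ imagePieces (LinearMap.pi fun _ : Fin 1 => π) (shiftedPiece k n d) γ ↔
        w 0 ∈ LinearMap.range π := by
        rw [imagePieces_shiftedPiece (single_mem_shiftedPiece_pi hπ)]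
        exact (and_iff_left hw).trans <| exists_congr fun q =>
          funext_iff.trans Fin.forall_fin_one
    _ ↔ eval 1 (w 0) = 0 := by rw [hrange, aeval_single_eq_zero_iff hmem hw0]
    _ ↔ chainBoundary k r (vertexChain k r w) = 0 := by
        rw [chainBoundary_vertexChain, Finsupp.single_eq_zero]
    _ ↔ vertexChain k r w ∈ imagePieces (chainBoundary k r) (faceChains k n 1) γ :=
      (mem_imagePieces_chainBoundary_iff (isGradedMap_vertexChain n γ w hw)).symm

variable (k r) in
/-- The identification of `R` with the free module `R^1`. -/
noncomputable def rankOneEquiv :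
    MvPolynomial (Fin r) k ≃ₗ[MvPolynomial (Fin r) k] (Fin 1 → MvPolynomial (Fin r) k) :=
  (LinearEquiv.funUnique (Fin 1) (MvPolynomial (Fin r) k) (MvPolynomial (Fin r) k)).symm

theorem map_rankOneEquiv_inf_weightedHomogeneousSubmodule
    (J : Submodule (MvPolynomial (Fin r) k) (MvPolynomial (Fin r) k)) (m : G) :
    (J.restrictScalars k ⊓ weightedHomogeneousSubmodule k n m).map
        ((rankOneEquiv k r).restrictScalars k).toLinearMap =
      (J.map (rankOneEquiv k r).toLinearMap).restrictScalars k ⊓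
        shiftedPiece k n (fun _ : Fin 1 => 0) m := by
  have hpiece (p : MvPolynomial (Fin r) k) :
      rankOneEquiv k r p ∈ shiftedPiece k n (fun _ : Fin 1 => 0) m ↔
        p ∈ weightedHomogeneousSubmodule k n m := by
    simp [mem_shiftedPiece_iff, rankOneEquiv]
  refine le_antisymm ?_ ?_
  · rintro _ ⟨p, hp, rfl⟩
    exact Submodule.mem_inf.2 ⟨⟨p, hp.1, rfl⟩, (hpiece p).2 hp.2⟩
  · intro w hw
    obtain ⟨⟨p, hp, rfl⟩, hpm⟩ := Submodule.mem_inf.1 hw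
    exact ⟨p, ⟨hp, (hpiece p).1 hpm⟩, rfl⟩

theorem multigradedBetti_range_pi {M : Type*} [AddCommGroup M] [Module (MvPolynomial (Fin r) k) M]
    (π : M →ₗ[MvPolynomial (Fin r) k] MvPolynomial (Fin r) k) (m : G) :
    multigradedBetti k n (fun _ : Fin 1 => 0) m
        (LinearMap.range (LinearMap.pi fun _ : Fin 1 => π)) =
      Module.finrank k ↥(Submodule.map
        (((Ideal.span (Set.range (X : Fin r → MvPolynomial (Fin r) k)) *
          LinearMap.range π).restrictScalars k ⊓ weightedHomogeneousSubmodule k n m).mkQ)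
        ((LinearMap.range π).restrictScalars k ⊓ weightedHomogeneousSubmodule k n m)) := by
  have hrange : LinearMap.range (LinearMap.pi fun _ : Fin 1 => π) =
      (LinearMap.range π).map (rankOneEquiv k r).toLinearMap :=
    LinearMap.range_comp π (rankOneEquiv k r).toLinearMap
  rw [multigradedBetti, hrange, ← Submodule.map_smul'',
    ← map_rankOneEquiv_inf_weightedHomogeneousSubmodule,
    ← map_rankOneEquiv_inf_weightedHomogeneousSubmodule]
  exact finrank_map_mkQ_map_equiv _ _ _

end Augmentation

theorem homology_nabla_computes_betti_general
    {G : Type} [AddCommGroup G] (k : Type) [Field k]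
    (S : AddSubmonoid G)
    {r : ℕ} (n : Fin r → G) (hmem : ∀ i, n i ∈ S)
    (IS : Ideal (MvPolynomial (Fin r) k))
    (hIS : IS = RingHom.ker (MvPolynomial.aeval
        (fun i : Fin r => AddMonoidAlgebra.single (⟨n i, hmem i⟩ : S) (1 : k)) :
          MvPolynomial (Fin r) k →ₐ[k] AddMonoidAlgebra k S).toRingHom)
    (mIdeal : Ideal (MvPolynomial (Fin r) k))
    (hmIdeal : mIdeal = Ideal.span (Set.range (X : Fin r → MvPolynomial (Fin r) k)))
    (s : ℕ → ℕ) (d : ∀ j, Fin (s j) → G)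
    (π : (Fin (s 1) → MvPolynomial (Fin r) k) →ₗ[MvPolynomial (Fin r) k]
          MvPolynomial (Fin r) k)
    (φ : ∀ j, (Fin (s (j + 2)) → MvPolynomial (Fin r) k) →ₗ[MvPolynomial (Fin r) k]
          (Fin (s (j + 1)) → MvPolynomial (Fin r) k))
    (hπrange : LinearMap.range π = IS)
    (hexact0 : LinearMap.range (φ 0) = LinearMap.ker π)
    (hexact : ∀ j, LinearMap.range (φ (j + 1)) = LinearMap.ker (φ j))
    (hminπ : ∀ e, π (Pi.single e 1) ∈ mIdeal)
    (hminφ : ∀ j e i, φ j (Pi.single e 1) i ∈ mIdeal)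
    (hgrπ : ∀ e, π (Pi.single e 1) ∈ weightedHomogeneousSubmodule k n (d 1 e))
    (hgrφ : ∀ j e i, φ j (Pi.single e 1) i ∈
      weightedHomogeneousSubmodule k n (d (j + 2) e - d (j + 1) i)) :
    ∀ m : G,
      (Module.finrank k ↥(sHred k (nablaLex n m) 0) =
        Module.finrank k ↥(Submodule.map
          (((mIdeal * IS).restrictScalars k ⊓ weightedHomogeneousSubmodule k n m).mkQ)
          (IS.restrictScalars k ⊓ weightedHomogeneousSubmodule k n m))) ∧
      (Module.finrank k ↥(sHred k (nablaLex n m) 1) =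
        multigradedBetti k n (d 1) m (LinearMap.ker π)) ∧
      (∀ j : ℕ, Module.finrank k ↥(sHred k (nablaLex n m) (j + 2)) =
        multigradedBetti k n (d (j + 2)) m (LinearMap.ker (φ j))) := by
  subst hmIdeal
  have hπ := single_mem_shiftedPiece_pi hgrπ
  have hφ (j e) : φ j (Pi.single e 1) ∈ shiftedPiece k n (d (j + 1)) (d (j + 2) e) :=
    mem_shiftedPiece_iff.2 (hgrφ j e)
  have hexactπ : LinearMap.range (φ 0) = LinearMap.ker (LinearMap.pi fun _ : Fin 1 => π) := by
    rw [hexact0, LinearMap.ker_pi, iInf_const]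
  have hcomparable0 := gradedComparable_vertexChain hmem hgrπ fun p => by rw [hπrange, hIS]; rfl
  have hcomparable (j) : GradedComparable (shiftedPiece k n (d (j + 2)))
      (shiftedPiece k n (d (j + 1))) (faceChains k n (j + 2)) (faceChains k n (j + 1)) (φ j)
      (chainBoundary k r) := by
    induction j with
    | zero =>
      exact hcomparable0.succ (isResolutionStep_shiftedPiece (hφ 0) hπ hexactπ)
        (isResolutionStep_chainBoundary n 0)
    | succ j ih =>
      exact ih.succ (isResolutionStep_shiftedPiece (hφ (j + 1)) (hφ j) (hexact j))
        (isResolutionStep_chainBoundary n (j + 1))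
  have hbetti (m j) : Module.finrank k (sHred k (nablaLex n m) (j + 1)) =
      multigradedBetti k n (d (j + 1)) m (LinearMap.range (φ j)) := by
    rw [finrank_sHred_nablaLex, ← (hcomparable j).torDim_eq,
      torDim_shiftedPiece_range (hφ j) (hminφ j)]
  refine fun m => ⟨?_, hexact0 ▸ hbetti m 0, fun j => hexact j ▸ hbetti m (j + 1)⟩
  rw [finrank_sHred_nablaLex, ← hcomparable0.torDim_eq,
    torDim_shiftedPiece_range hπ fun e _ => hminπ e, multigradedBetti_range_pi, hπrange]

/-- Given a minimal `S`-graded free resolution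
`… → R^{s_{j+1}} → R^{s_j} → … → R^{s_1} → R → k[S] → 0` of the monoid algebra, with
`N_0 = I_S` and `N_j = ker φ_j` the `j`-th syzygy module, for every `m ∈ S` and every
`j ≥ 0` the dimension over `k` of the reduced homology `H̃_j(∇_m)` equals the multigraded
Betti number `dim_k (N_j)_m/(𝔪 N_j)_m`. -/
theorem homology_nabla_computes_betti
    {G : Type} [AddCommGroup G] (k : Type) [Field k]
    (S : AddSubmonoid G) (hFG : S.FG) (hcf : ∀ g ∈ S, -g ∈ S → g = 0)
    {r : ℕ} (n : Fin r → G) (hn : ∀ i, n i ≠ 0)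
    (hgen : S = AddSubmonoid.closure (Set.range n)) (hmem : ∀ i, n i ∈ S)
    -- the toric ideal and the irrelevant ideal
    (IS : Ideal (MvPolynomial (Fin r) k))
    (hIS : IS = RingHom.ker (MvPolynomial.aeval
        (fun i : Fin r => AddMonoidAlgebra.single (⟨n i, hmem i⟩ : S) (1 : k)) :
          MvPolynomial (Fin r) k →ₐ[k] AddMonoidAlgebra k S).toRingHom)
    (mIdeal : Ideal (MvPolynomial (Fin r) k))
    (hmIdeal : mIdeal = Ideal.span (Set.range (X : Fin r → MvPolynomial (Fin r) k)))
    -- a minimal S-graded free resolution: ranks, degree shifts and differentials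
    (s : ℕ → ℕ) (d : ∀ j, Fin (s j) → G)
    (π : (Fin (s 1) → MvPolynomial (Fin r) k) →ₗ[MvPolynomial (Fin r) k]
          MvPolynomial (Fin r) k)
    (φ : ∀ j, (Fin (s (j + 2)) → MvPolynomial (Fin r) k) →ₗ[MvPolynomial (Fin r) k]
          (Fin (s (j + 1)) → MvPolynomial (Fin r) k))
    -- N₀ = I_S and exactness
    (hπrange : LinearMap.range π = IS)
    (hexact0 : LinearMap.range (φ 0) = LinearMap.ker π)
    (hexact : ∀ j, LinearMap.range (φ (j + 1)) = LinearMap.ker (φ j))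
    -- minimality: all matrix entries lie in 𝔪
    (hminπ : ∀ e, π (Pi.single e 1) ∈ mIdeal)
    (hminφ : ∀ j e i, φ j (Pi.single e 1) i ∈ mIdeal)
    -- the differentials are S-graded for the degree shifts d
    (hgrπ : ∀ e, π (Pi.single e 1) ∈ weightedHomogeneousSubmodule k n (d 1 e))
    (hgrφ : ∀ j e i, φ j (Pi.single e 1) i ∈
      weightedHomogeneousSubmodule k n (d (j + 2) e - d (j + 1) i)) :
    ∀ m ∈ S,
      -- j = 0 : N₀ = I_S
      (Module.finrank k ↥(sHred k (nablaLex n m) 0) =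
        Module.finrank k ↥(Submodule.map
          (((mIdeal * IS).restrictScalars k ⊓ weightedHomogeneousSubmodule k n m).mkQ)
          (IS.restrictScalars k ⊓ weightedHomogeneousSubmodule k n m))) ∧
      -- j = 1 : N₁ = ker π ⊆ R^{s 1}
      (Module.finrank k ↥(sHred k (nablaLex n m) 1) =
        multigradedBetti k n (d 1) m (LinearMap.ker π)) ∧
      -- j ≥ 2 : N_{j+2} = ker (φ j) ⊆ R^{s (j+2)}
      (∀ j : ℕ, Module.finrank k ↥(sHred k (nablaLex n m) (j + 2)) =
        multigradedBetti k n (d (j + 2)) m (LinearMap.ker (φ j))) := by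
  exact fun m _ => homology_nabla_computes_betti_general k S n hmem IS hIS mIdeal hmIdeal s d π φ
    hπrange hexact0 hexact hminπ hminφ hgrπ hgrφ m
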